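/- Let $Y$ be an infinite-dimensional separable Banach space. Then for every equivalent norm on $Y$ and every $\delta > 0$, there is an equivalent norm $\|\cdot\|_1$ on $Y$ within Banach-Mazur distance $\delta$ of the given norm such that $(Y, \|\cdot\|_1)$ is strictly convex but not locally uniformly convex (in particular, not uniformly convex). -/

import Mathlib

open Filter

lemma aux_functional {Y : Type*} [AddCommGroup Y] [Module ℝ Y] (N : Y → ℝ)
    (hz : ∀ y, N y = 0 → y = 0)
    (hs : ∀ (c : ℝ) (y : Y), N (c • y) = |c| * N y)
    (ha : ∀ x y : Y, N (x + y) ≤ N x + N y) (hn : ∀ y, 0 ≤ N y) (d : Y) :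
    ∃ f : Y →ₗ[ℝ] ℝ, f d = N d ∧ ∀ y, |f y| ≤ N y := by
  by_cases hd : d = 0
  · subst hd
    refine ⟨0, ?_, fun y => by simpa using hn y⟩
    have := hs 0 0
    simp at this
    simp [this]
  obtain ⟨g, hg1, hg2⟩ := exists_extension_of_le_sublinear
    (LinearPMap.mkSpanSingleton (K := ℝ) d (N d) hd) N
    (fun c hc x => by rw [hs, abs_of_pos hc]) ha (by
      rintro ⟨x, hx⟩
      obtain ⟨c, rfl⟩ := Submodule.mem_span_singleton.1 hx
      have := LinearPMap.mkSpanSingleton'_apply (R := ℝ) d (N d) (by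
        intro c hc
        rcases smul_eq_zero.1 hc with h | h
        · simp [h]
        · exact absurd h hd) c hx
      refine (le_of_eq this).trans ?_
      simp only [hs, smul_eq_mul]
      exact mul_le_mul_of_nonneg_right (le_abs_self c) (hn d))
  refine ⟨g, ?_, fun y => abs_le.2 ⟨?_, hg2 y⟩⟩
  · have h1 := hg1 ⟨d, Submodule.mem_span_singleton_self d⟩
    refine h1.trans ?_
    exact LinearPMap.mkSpanSingleton_apply ℝ ℝ hd (N d)
  · have h := hg2 (-y)
    have h2 := hs (-1) y
    simp at h2
    rw [h2] at h
    simp at h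
    linarith

lemma aux_sum (a : ℕ → ℝ) (C : ℝ) (h : ∀ k, |a k| ≤ C) (n : ℕ) (h0 : ∀ k < n, a k = 0)
    (s : Finset ℕ) :
    ∑ k ∈ s, ‖(1/4 : ℝ)^k * a k‖^(2:ENNReal).toReal ≤ (2 * (1/2)^n * C)^(2:ENNReal).toReal := by
  have hC : 0 ≤ C := (abs_nonneg _).trans (h 0)
  have hk : ∀ k ∈ s, ‖(1/4 : ℝ)^k * a k‖^(2:ENNReal).toReal ≤ (1/2)^k * ((1/4)^n * C^2) := by
    intro k _
    simp only [ENNReal.toReal_ofNat, Real.rpow_ofNat, Real.norm_eq_abs, sq_abs]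
    by_cases hkn : k < n
    · rw [h0 k hkn]; simp; positivity
    · have h1 : (1/4 : ℝ)^k ≤ (1/4)^n :=
        pow_le_pow_of_le_one (by norm_num) (by norm_num) (not_lt.1 hkn)
      have h2 : (1/4 : ℝ)^k ≤ (1/2)^k := pow_le_pow_left₀ (by norm_num) (by norm_num) k
      have h3 : (a k)^2 ≤ C^2 := sq_le_sq' (by linarith [(abs_le.1 (h k)).1]) (abs_le.1 (h k)).2
      calc ((1/4 : ℝ)^k * a k)^2 = (1/4)^k * ((1/4)^k * (a k)^2) := by ring
        _ ≤ _ := by gcongr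
  refine (Finset.sum_le_sum hk).trans ?_
  rw [← Finset.sum_mul]
  have h2 : ∑ k ∈ s, (1/2 : ℝ)^k ≤ 2 := by
    exact (summable_geometric_two.sum_le_tsum s (fun _ _ => by positivity)).trans
      tsum_geometric_two.le
  simp only [ENNReal.toReal_ofNat, Real.rpow_ofNat]
  have h4 : (1/4 : ℝ)^n = ((1/2)^n)^2 := by rw [← pow_mul, mul_comm, pow_mul]; norm_num
  rw [h4]
  have : 0 ≤ ((1/2 : ℝ)^n)^2 * C^2 := by positivity
  nlinarith

lemma aux_T {Y : Type*} [AddCommGroup Y] [Module ℝ Y] (N : Y → ℝ)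
    (F : ℕ → Y →ₗ[ℝ] ℝ) (hF : ∀ k y, |F k y| ≤ N y) (hsep : ∀ y, (∀ k, F k y = 0) → y = 0) :
    ∃ T : Y →ₗ[ℝ] lp (fun _ : ℕ => ℝ) 2, Function.Injective T ∧
      ∀ n y, (∀ k < n, F k y = 0) → ‖T y‖ ≤ 2 * (1/2)^n * N y := by
  refine ⟨{ toFun := fun y => ⟨fun k => (1/4 : ℝ)^k * F k y,
              memℓp_gen' (aux_sum (fun k => F k y) (N y) (fun k => hF k y) 0 (by simp))⟩
            map_add' := ?_
            map_smul' := ?_ }, ?_, ?_⟩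
  · intro x y; ext k; simp [mul_add]; rfl
  · intro c y; ext k; simp; ring
  · rw [injective_iff_map_eq_zero]
    intro y hy
    apply hsep
    intro k
    have := congrArg (fun v : lp (fun _ : ℕ => ℝ) 2 => v k) hy
    simpa using this
  · intro n y h0
    have hN : 0 ≤ N y := (abs_nonneg _).trans (hF 0 y)
    exact lp.norm_le_of_forall_sum_le (by simp) (by positivity)
      (aux_sum (fun k => F k y) (N y) (fun k => hF k y) n h0)

lemma aux_z {Y : Type*} [AddCommGroup Y] [Module ℝ Y] (hinf : ¬ FiniteDimensional ℝ Y)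
    (f : Y →ₗ[ℝ] ℝ) (F : ℕ → Y →ₗ[ℝ] ℝ) (n : ℕ) :
    ∃ z : Y, z ≠ 0 ∧ f z = 0 ∧ ∀ k < n, F k z = 0 := by
  by_contra! hcon
  apply hinf
  let L : Y →ₗ[ℝ] ℝ × (Fin n → ℝ) := f.prod (LinearMap.pi fun k => F k)
  refine FiniteDimensional.of_injective L ?_
  rw [injective_iff_map_eq_zero]
  intro y hy
  by_contra hy0
  have h1 : f y = 0 := congrArg Prod.fst hy
  obtain ⟨k, hk, hk2⟩ := hcon y hy0 h1
  exact hk2 (congrFun (congrArg Prod.snd hy) ⟨k, hk⟩)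



/-- Lemma 5.4: on an infinite-dimensional separable Banach space `Y`, the strictly convex
norms which are not locally uniformly convex are dense (w.r.t. the Banach–Mazur distance)
among all equivalent norms: given any equivalent norm `N₀` on `Y` and `δ > 0`, there is an
equivalent norm `N₁` with `e^{-δ} N₀ ≤ N₁ ≤ e^{δ} N₀` which is strictly convex but not
locally uniformly convex (in particular, not uniformly convex). -/
theorem stmt12 (Y : Type*) [NormedAddCommGroup Y] [NormedSpace ℝ Y] [CompleteSpace Y]
    [TopologicalSpace.SeparableSpace Y] (hinf : ¬ FiniteDimensional ℝ Y)
    (N₀ : Y → ℝ)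
    (hN₀zero : ∀ y, N₀ y = 0 → y = 0)
    (hN₀smul : ∀ (c : ℝ) (y : Y), N₀ (c • y) = |c| * N₀ y)
    (hN₀add : ∀ x y : Y, N₀ (x + y) ≤ N₀ x + N₀ y)
    (hN₀equiv : ∃ a b : ℝ, 0 < a ∧ ∀ y : Y, a * ‖y‖ ≤ N₀ y ∧ N₀ y ≤ b * ‖y‖)
    (δ : ℝ) (hδ : 0 < δ) :
    ∃ N₁ : Y → ℝ,
      -- `N₁` is an equivalent norm within Banach–Mazur distance `δ` of `N₀`
      (∀ y, N₁ y = 0 → y = 0) ∧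
      (∀ (c : ℝ) (y : Y), N₁ (c • y) = |c| * N₁ y) ∧
      (∀ x y : Y, N₁ (x + y) ≤ N₁ x + N₁ y) ∧
      (∀ y, Real.exp (-δ) * N₀ y ≤ N₁ y ∧ N₁ y ≤ Real.exp δ * N₀ y) ∧
      -- `N₁` is strictly convex
      (∀ x y : Y, N₁ x = 1 → N₁ y = 1 → N₁ ((2⁻¹ : ℝ) • (x + y)) = 1 → x = y) ∧
      -- `N₁` is not locally uniformly convex
      (∃ e : Y, N₁ e = 1 ∧ ∃ u : ℕ → Y,
        Tendsto (fun n => N₁ (u n)) atTop (nhds 1) ∧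
        Tendsto (fun n => N₁ (e + u n)) atTop (nhds 2) ∧
        ¬ Tendsto (fun n => N₁ (e - u n)) atTop (nhds 0)) := by
  obtain ⟨a, b, ha, hab⟩ := hN₀equiv
  have hn : ∀ y, 0 ≤ N₀ y := fun y => (by positivity : 0 ≤ a * ‖y‖).trans (hab y).1
  have hN0 : N₀ 0 = 0 := by simpa using hN₀smul 0 0
  have hfun := aux_functional N₀ hN₀zero hN₀smul hN₀add hn
  choose G hG1 hG2 using hfun
  let F : ℕ → Y →ₗ[ℝ] ℝ := fun k => G (TopologicalSpace.denseSeq Y k)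
  have hF : ∀ k y, |F k y| ≤ N₀ y := fun k y => hG2 _ y
  have hsub : ∀ x y, N₀ (x - y) = N₀ (y - x) := fun x y => by
    have := hN₀smul (-1) (y - x)
    simpa using this
  have hsep : ∀ y, (∀ k, F k y = 0) → y = 0 := by
    intro y hy
    by_contra hy0
    have hyp : 0 < ‖y‖ := norm_pos_iff.2 hy0
    have hb : 0 ≤ b := by
      have := (hn y).trans (hab y).2
      exact nonneg_of_mul_nonneg_left this hyp
    have hr : 0 < a * ‖y‖ / (2 * b + 1) := by positivity
    obtain ⟨k, hk⟩ := (TopologicalSpace.denseRange_denseSeq Y).exists_dist_lt y hr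
    set d := TopologicalSpace.denseSeq Y k
    have h1 : F k (d - y) = N₀ d := by
      rw [map_sub, hy k, sub_zero]; exact hG1 d
    have h2 : N₀ d ≤ N₀ (y - d) := by
      rw [hsub, ← h1]; exact (le_abs_self _).trans (hF k _)
    have h3 : N₀ y ≤ N₀ (y - d) + N₀ d := by simpa using hN₀add (y - d) d
    have h4 := (hab (y - d)).2
    have h5 := (hab y).1
    rw [dist_eq_norm, lt_div_iff₀ (by positivity)] at hk
    nlinarith [norm_nonneg (y - d)]
  obtain ⟨T, hTinj, hT⟩ := aux_T N₀ F hF hsep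
  -- normalized points
  have hnorm : ∀ y, y ≠ 0 → N₀ ((N₀ y)⁻¹ • y) = 1 := fun y hy => by
    have : N₀ y ≠ 0 := fun h => hy (hN₀zero y h)
    rw [hN₀smul, abs_of_nonneg (inv_nonneg.2 (hn y)), inv_mul_cancel₀ this]
  obtain ⟨e₀, he₀, -⟩ := aux_z hinf 0 F 0
  obtain ⟨e, he⟩ : ∃ e, N₀ e = 1 := ⟨_, hnorm e₀ he₀⟩
  obtain ⟨f, hfe, hf⟩ : ∃ f : Y →ₗ[ℝ] ℝ, f e = 1 ∧ ∀ y, |f y| ≤ N₀ y :=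
    ⟨G e, by rw [hG1, he], hG2 e⟩
  have hz : ∀ n, ∃ z, N₀ z = 1 ∧ f z = 0 ∧ ∀ k < n, F k z = 0 := fun n => by
    obtain ⟨z, h1, h2, h3⟩ := aux_z hinf f F n
    exact ⟨_, hnorm z h1, by simp [h2], fun k hk => by simp [h3 k hk]⟩
  choose z hz1 hzf hzF using hz
  obtain ⟨ε, hε⟩ : ∃ ε, ε = 1 - Real.exp (-δ) := ⟨_, rfl⟩
  have hε0 : 0 < ε := by
    have : Real.exp (-δ) < 1 := Real.exp_lt_one_iff.2 (by linarith)
    linarith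
  have hε1 : ε < 1 := by linarith [Real.exp_pos (-δ)]
  have hexp : Real.exp (-δ) = 1 - ε := by linarith
  let N₂ : Y → ℝ := fun y => max ((1 - ε) * N₀ y) |f y|
  have hN₂le : ∀ y, N₂ y ≤ N₀ y := fun y =>
    max_le (by nlinarith [hn y]) (hf y)
  have hN₂ge : ∀ y, (1 - ε) * N₀ y ≤ N₂ y := fun y => le_max_left _ _
  have hN₂smul : ∀ (c : ℝ) y, N₂ (c • y) = |c| * N₂ y := fun c y => by
    simp only [N₂]
    rw [mul_max_of_nonneg _ _ (abs_nonneg c), hN₀smul, map_smul, smul_eq_mul, abs_mul]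
    congr 1; ring
  have hN₂add : ∀ x y, N₂ (x + y) ≤ N₂ x + N₂ y := fun x y => by
    refine max_le ?_ ?_
    · have h1 := hN₂ge x
      have h2 := hN₂ge y
      have h3 := mul_le_mul_of_nonneg_left (hN₀add x y) (by linarith : 0 ≤ 1 - ε)
      linarith
    · rw [map_add]
      exact (abs_add_le _ _).trans (add_le_add (le_max_right _ _) (le_max_right _ _))
  obtain ⟨N₁, hN₁⟩ : ∃ N₁ : Y → ℝ, ∀ y, N₁ y = N₂ y + δ / 2 * ‖T y‖ := ⟨_, fun _ => rfl⟩
  have hN₁ge : ∀ y, (1 - ε) * N₀ y ≤ N₁ y := fun y => by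
    rw [hN₁]
    have : 0 ≤ δ / 2 * ‖T y‖ := by positivity
    linarith [hN₂ge y]
  have hN₁smul : ∀ (c : ℝ) y, N₁ (c • y) = |c| * N₁ y := fun c y => by
    rw [hN₁, hN₁, hN₂smul, map_smul, norm_smul, Real.norm_eq_abs]; ring
  have hTadd : ∀ x y, ‖T (x + y)‖ ≤ ‖T x‖ + ‖T y‖ := fun x y => by
    rw [map_add]; exact norm_add_le _ _
  have hflat : ∀ n (c : ℝ), 1 ≤ c → N₂ (c • e + ε • z n) = c := fun n c hc => by
    have h1 : f (c • e + ε • z n) = c := by simp [hfe, hzf]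
    have h2 : N₀ (c • e + ε • z n) ≤ c + ε := by
      refine (hN₀add _ _).trans ?_
      rw [hN₀smul, hN₀smul, he, hz1, abs_of_pos hε0, abs_of_pos (by linarith : 0 < c)]
      simp
    simp only [N₂]
    rw [h1, abs_of_pos (by linarith : 0 < c)]
    apply max_eq_right
    nlinarith
  have hTz : Tendsto (fun n => T (z n)) atTop (nhds 0) := by
    apply squeeze_zero_norm (a := fun n => 2 * (1/2 : ℝ)^n)
    · intro n
      have := hT n (z n) (hzF n)
      rwa [hz1, mul_one] at this
    · have := (tendsto_pow_atTop_nhds_zero_of_lt_one (r := (1/2 : ℝ)) (by norm_num)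
        (by norm_num)).const_mul 2
      simpa using this
  have hlim : ∀ c : ℝ, 1 ≤ c → Tendsto (fun n => N₁ (c • e + ε • z n)) atTop
      (nhds (c * (1 + δ / 2 * ‖T e‖))) := fun c hc => by
    have h1 : Tendsto (fun n => c + δ / 2 * ‖c • T e + ε • T (z n)‖) atTop
        (nhds (c + δ / 2 * ‖c • T e + ε • (0 : lp (fun _ : ℕ => ℝ) 2)‖)) :=
      (((hTz.const_smul ε).const_add (c • T e)).norm.const_mul (δ / 2)).const_add c
    have h2 : c + δ / 2 * ‖c • T e + ε • (0 : lp (fun _ : ℕ => ℝ) 2)‖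
        = c * (1 + δ / 2 * ‖T e‖) := by
      rw [smul_zero, add_zero, norm_smul, Real.norm_eq_abs, abs_of_pos (by linarith : 0 < c)]
      ring
    rw [h2] at h1
    refine h1.congr fun n => ?_
    rw [hN₁, hflat n c hc, map_add, map_smul, map_smul]
  obtain ⟨M, hM⟩ : ∃ M, M = 1 + δ / 2 * ‖T e‖ := ⟨_, rfl⟩
  have hMpos : 0 < M := by rw [hM]; positivity
  have hMi : 0 < M⁻¹ := inv_pos.2 hMpos
  have hN₁e : N₁ e = M := by
    rw [hN₁, hM]
    congr 1
    simp only [N₂, he, hfe]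
    rw [abs_one]
    exact max_eq_right (by linarith)
  refine ⟨N₁, ?_, hN₁smul, ?_, ?_, ?_, ?_⟩
  · intro y hy
    apply hN₀zero
    have := hN₁ge y
    nlinarith [hn y]
  · intro x y
    rw [hN₁, hN₁, hN₁]
    have := mul_le_mul_of_nonneg_left (hTadd x y) (by positivity : 0 ≤ δ / 2)
    linarith [hN₂add x y]
  · intro y
    refine ⟨hexp ▸ hN₁ge y, ?_⟩
    have h1 := hT 0 y (by simp)
    have h2 := mul_le_mul_of_nonneg_right (Real.add_one_le_exp δ) (hn y)
    have h3 := mul_le_mul_of_nonneg_left h1 (by positivity : 0 ≤ δ / 2)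
    rw [hN₁]
    simp at h3
    linarith [hN₂le y]
  · intro x y hx hy hxy
    rw [hN₁smul, abs_of_pos (by norm_num)] at hxy
    have h1 : ‖T x + T y‖ = ‖T x‖ + ‖T y‖ := by
      refine le_antisymm (norm_add_le _ _) ?_
      rw [hN₁] at hx hy hxy
      rw [map_add] at hxy
      have h2 : δ / 2 * (‖T x‖ + ‖T y‖) ≤ δ / 2 * ‖T x + T y‖ := by linarith [hN₂add x y]
      exact le_of_mul_le_mul_left h2 (by positivity)
    have h2 : SameRay ℝ x y :=
      (hTinj.sameRay_map_iff).1 (sameRay_iff_norm_add.2 h1)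
    obtain ⟨u, p, q, hp, hq, -, rfl, rfl⟩ := h2.exists_eq_smul
    rw [hN₁smul, abs_of_nonneg hp] at hx
    rw [hN₁smul, abs_of_nonneg hq] at hy
    have hu : N₁ u ≠ 0 := fun h => by simp [h] at hx
    rw [mul_right_cancel₀ hu (hx.trans hy.symm)]
  · refine ⟨M⁻¹ • e, ?_, fun n => M⁻¹ • (e + ε • z n), ?_, ?_, ?_⟩
    · rw [hN₁smul, hN₁e, abs_of_pos hMi, inv_mul_cancel₀ hMpos.ne']
    · have h := (hlim 1 le_rfl).const_mul M⁻¹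
      rw [← hM, one_mul, inv_mul_cancel₀ hMpos.ne'] at h
      refine h.congr fun n => ?_
      rw [hN₁smul, abs_of_pos hMi, one_smul]
    · have h := (hlim 2 (by norm_num)).const_mul M⁻¹
      rw [← hM, mul_left_comm, inv_mul_cancel₀ hMpos.ne', mul_one] at h
      refine h.congr fun n => ?_
      rw [← smul_add, hN₁smul, abs_of_pos hMi, ← add_assoc, two_smul]
    · intro h
      have h1 : ∀ n, M⁻¹ * (ε * (1 - ε)) ≤ N₁ (M⁻¹ • e - M⁻¹ • (e + ε • z n)) := fun n => by
        have h2 : M⁻¹ • e - M⁻¹ • (e + ε • z n) = (-(M⁻¹ * ε)) • z n := by module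
        rw [h2, hN₁smul, abs_neg, abs_of_pos (by positivity), mul_assoc]
        have := hN₁ge (z n)
        rw [hz1, mul_one] at this
        gcongr
      have h3 := ge_of_tendsto' h h1
      have : 0 < M⁻¹ * (ε * (1 - ε)) := mul_pos hMi (mul_pos hε0 (by linarith))
      linarith
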